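/- arXiv:2602.06168 — 6 statements merged into one kernel-verified Lean document; each statement's English description precedes it below -/
import Mathlib

section
/- For every μ > 0, every positive integer n, and every x ∈ [0,1], one has a_n(x) ≥ a_{n+1}(x), where a_n(x) := ln(1 + x/(n(1+μ))) / ln(1 + 1/(n(1+μ))); that is, for each fixed x the sequence (a_n(x))_n is nonincreasing in n. -/
open Real Filter Set

/-- `logμ μ x = ln(1+μ+x)`. -/
noncomputable def logμ (μ x : ℝ) : ℝ := Real.log (1 + μ + x)

/-- `a μ n x = ln(1 + x/(n(1+μ))) / ln(1 + 1/(n(1+μ)))`. -/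
noncomputable def aFun (μ : ℝ) (n : ℕ) (x : ℝ) : ℝ :=
  Real.log (1 + x / (n * (1 + μ))) / Real.log (1 + 1 / (n * (1 + μ)))

/-- Bernstein basis polynomial `p_{n,k}(y) = C(n,k) y^k (1-y)^(n-k)`. -/
noncomputable def pB (n k : ℕ) (y : ℝ) : ℝ :=
  (n.choose k : ℝ) * y ^ k * (1 - y) ^ (n - k)

/-- Classical Bernstein operator. -/
noncomputable def Bop (n : ℕ) (g : ℝ → ℝ) (y : ℝ) : ℝ :=
  ∑ k ∈ Finset.range (n + 1), g ((k : ℝ) / (n : ℝ)) * pB n k y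

/-- Bernstein-type logarithmic operator `L_n`. -/
noncomputable def Lop (μ : ℝ) (n : ℕ) (f : ℝ → ℝ) (x : ℝ) : ℝ :=
  logμ μ x * ∑ k ∈ Finset.range (n + 1),
    f ((k : ℝ) / (n : ℝ)) * (1 / logμ μ ((k : ℝ) / (n : ℝ))) * pB n k (aFun μ n x)

/-! With `b = 1 + 1 / (n * (1 + μ))`, the number `aFun μ n x` is the base-`b` logarithm of the
weighted arithmetic mean of `1` and `b` with weights `1 - x` and `x`. As `n` grows, `b` decreases
to `1`, so it suffices that this logarithm increases with `b > 1`. A larger base is a power `b ^ p`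
with `p ≥ 1`, and convexity of `y ↦ y ^ p` says that the mean of `1` and `b ^ p` is at least
the `p`-th power of the mean of `1` and `b`. -/

theorem rpow_one_sub_add_mul_le {x b p : ℝ} (hx : x ∈ Icc (0 : ℝ) 1) (hb : 0 ≤ b) (hp : 1 ≤ p) :
    (1 - x + x * b) ^ p ≤ 1 - x + x * b ^ p := by
  simpa only [smul_eq_mul, one_rpow, mul_one] using
    (convexOn_rpow hp).2 (mem_Ici.2 zero_le_one) (mem_Ici.2 hb)
      (sub_nonneg.2 hx.2) hx.1 (sub_add_cancel 1 x)

theorem monotoneOn_logb_one_sub_add_mul {x : ℝ} (hx : x ∈ Icc (0 : ℝ) 1) :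
    MonotoneOn (fun b : ℝ ↦ logb b (1 - x + x * b)) (Ioi 1) := by
  intro b (hb : 1 < b) c (hc : 1 < c) hbc
  have hb0 : 0 < b := by linarith
  have mean_pos {d : ℝ} (hd : 1 < d) : 0 < 1 - x + x * d := by nlinarith [hx.1]
  obtain ⟨p, hp, rfl⟩ : ∃ p, 1 ≤ p ∧ b ^ p = c :=
    ⟨logb b c, (le_logb_iff_rpow_le hb (by linarith)).2 (by rwa [rpow_one]),
      rpow_logb hb0 hb.ne' (by linarith)⟩
  refine (le_logb_iff_rpow_le hc (mean_pos hc)).2 ?_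
  calc (b ^ p) ^ logb b (1 - x + x * b)
      = (b ^ logb b (1 - x + x * b)) ^ p := by
        rw [← rpow_mul hb0.le, mul_comm, rpow_mul hb0.le]
    _ = (1 - x + x * b) ^ p := by rw [rpow_logb hb0 hb.ne' (mean_pos hb)]
    _ ≤ 1 - x + x * b ^ p := rpow_one_sub_add_mul_le hx hb0.le hp

theorem aFun_eq_logb (μ : ℝ) (n : ℕ) (x : ℝ) :
    aFun μ n x = logb (1 + 1 / (n * (1 + μ))) (1 - x + x * (1 + 1 / (n * (1 + μ)))) := by
  rw [aFun, log_div_log]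
  congr 1
  ring

theorem stmt2_general {μ : ℝ} (hμ : -1 < μ) {x : ℝ} (hx : x ∈ Icc (0 : ℝ) 1) :
    AntitoneOn (fun n : ℕ ↦ aFun μ n x) (Ioi 0) := by
  have hμ1 : 0 < 1 + μ := by linarith
  have one_lt_base {n : ℕ} (hn : 0 < n) : 1 < 1 + 1 / (n * (1 + μ)) :=
    lt_add_of_pos_right 1 (by positivity)
  intro m (hm : 0 < m) n (hn : 0 < n) hmn
  simp only [aFun_eq_logb]
  exact monotoneOn_logb_one_sub_add_mul hx (one_lt_base hn) (one_lt_base hm) (by gcongr)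

theorem stmt2 (μ : ℝ) (hμ : 0 < μ) (n : ℕ) (hn : 0 < n) (x : ℝ)
    (hx : x ∈ Set.Icc (0:ℝ) 1) :
    aFun μ (n + 1) x ≤ aFun μ n x :=
  stmt2_general (by linarith) hx hn n.succ_pos n.le_succ
end

section
/- Let μ > 0 and let f : [0,1] → ℝ be bounded. Then for every x ∈ [0,1] at which f is continuous, lim_{n→∞} L_n(f, x) = f(x). -/
open Real Filter Set

/-!
Since `L_n(f, x) = ln_μ(x) · B_n(f / ln_μ, a_n(x))`, where `B_n` is the Bernstein operator and
`a_n(x) → x`, it suffices that `B_n(g, y_n) → g(x)` whenever `y_n → x` and `g` is bounded on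
`[0, 1]` and continuous at `x`. The weights of `B_n(·, y)` are the binomial distribution on the
nodes `k / n`, with mean `y` and variance `y (1 - y) / n`, so their second moment about `x` is
`y (1 - y) / n + (y - x) ^ 2`. It tends to `0` along `y = y_n`, and Chebyshev's argument applies:
`|g t - g x| ≤ ε + C (t - x) ^ 2`, averaged over the nodes.
-/

section WeightedSums

open scoped Topology

variable {X E : Type*} [PseudoMetricSpace X] [NormedAddCommGroup E]
  {g : X → E} {s : Set X} {x : X} {K : ℝ}

lemma exists_norm_sub_le_add_mul_dist_sq (hg : ContinuousWithinAt g s x)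
    (hK : ∀ t ∈ s, ‖g t‖ ≤ K) {ε : ℝ} (hε : 0 < ε) :
    ∃ C : ℝ, ∀ t ∈ s, ‖g t - g x‖ ≤ ε + C * dist t x ^ 2 := by
  obtain ⟨δ, hδ, hnear⟩ := Metric.continuousWithinAt_iff.1 hg ε hε
  refine ⟨(K + ‖g x‖) / δ ^ 2, fun t ht => ?_⟩
  have hK0 : 0 ≤ K := (norm_nonneg _).trans (hK t ht)
  rcases lt_or_ge (dist t x) δ with htx | htx
  · calc ‖g t - g x‖ ≤ ε := by simpa only [dist_eq_norm] using (hnear ht htx).le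
      _ ≤ ε + (K + ‖g x‖) / δ ^ 2 * dist t x ^ 2 := le_add_of_nonneg_right (by positivity)
  · calc ‖g t - g x‖ ≤ K + ‖g x‖ := (norm_sub_le _ _).trans (by gcongr; exact hK t ht)
      _ = (K + ‖g x‖) / δ ^ 2 * δ ^ 2 := by field_simp
      _ ≤ (K + ‖g x‖) / δ ^ 2 * dist t x ^ 2 := by gcongr
      _ ≤ ε + (K + ‖g x‖) / δ ^ 2 * dist t x ^ 2 := le_add_of_nonneg_left hε.le

variable {κ : Type*} [NormedSpace ℝ E]

lemma norm_sum_smul_sub_le {J : Finset κ} {w : κ → ℝ} {t : κ → X} {ε C : ℝ}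
    (hw : ∀ k ∈ J, 0 ≤ w k) (hsum : ∑ k ∈ J, w k = 1)
    (hg : ∀ k ∈ J, ‖g (t k) - g x‖ ≤ ε + C * dist (t k) x ^ 2) :
    ‖∑ k ∈ J, w k • g (t k) - g x‖ ≤ ε + C * ∑ k ∈ J, w k * dist (t k) x ^ 2 :=
  calc ‖∑ k ∈ J, w k • g (t k) - g x‖ = ‖∑ k ∈ J, w k • (g (t k) - g x)‖ := by
        simp only [smul_sub, Finset.sum_sub_distrib, ← Finset.sum_smul, hsum, one_smul]
    _ ≤ ∑ k ∈ J, w k * (ε + C * dist (t k) x ^ 2) := by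
        refine norm_sum_le_of_le J fun k hk => ?_
        rw [norm_smul, Real.norm_of_nonneg (hw k hk)]
        exact mul_le_mul_of_nonneg_left (hg k hk) (hw k hk)
    _ = ε + C * ∑ k ∈ J, w k * dist (t k) x ^ 2 := by
        simp only [mul_add, Finset.sum_add_distrib, ← Finset.sum_mul, hsum, one_mul,
          mul_left_comm _ C, ← Finset.mul_sum]

lemma tendsto_sum_smul_of_tendsto_sum_mul_dist_sq {ι : Type*} {l : Filter ι}
    {J : ι → Finset κ} {w : ι → κ → ℝ} {t : ι → κ → X}
    (hg : ContinuousWithinAt g s x) (hK : ∀ t ∈ s, ‖g t‖ ≤ K)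
    (hw : ∀ᶠ i in l, ∀ k ∈ J i, 0 ≤ w i k) (hsum : ∀ᶠ i in l, ∑ k ∈ J i, w i k = 1)
    (ht : ∀ᶠ i in l, ∀ k ∈ J i, t i k ∈ s)
    (hmoment : Tendsto (fun i => ∑ k ∈ J i, w i k * dist (t i k) x ^ 2) l (𝓝 0)) :
    Tendsto (fun i => ∑ k ∈ J i, w i k • g (t i k)) l (𝓝 (g x)) := by
  refine Metric.tendsto_nhds.2 fun ε hε => ?_
  obtain ⟨C, hC⟩ := exists_norm_sub_le_add_mul_dist_sq hg hK (half_pos hε)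
  have hbound : Tendsto (fun i => ε / 2 + C * ∑ k ∈ J i, w i k * dist (t i k) x ^ 2) l
      (𝓝 (ε / 2)) := by
    simpa only [mul_zero, add_zero] using (hmoment.const_mul C).const_add (ε / 2)
  filter_upwards [hw, hsum, ht, hbound.eventually_lt_const (half_lt_self hε)]
    with i hwi hsumi hti hi
  rw [dist_eq_norm]
  exact (norm_sum_smul_sub_le hwi hsumi fun k hk => hC _ (hti k hk)).trans_lt hi

end WeightedSums

section Bernstein

open scoped Topology

lemma pB_eq_eval_bernsteinPolynomial (n k : ℕ) (y : ℝ) :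
    pB n k y = (bernsteinPolynomial ℝ n k).eval y := by
  simp [pB, bernsteinPolynomial]

lemma pB_nonneg (n k : ℕ) {y : ℝ} (hy : y ∈ Icc (0 : ℝ) 1) : 0 ≤ pB n k y :=
  mul_nonneg (mul_nonneg (Nat.cast_nonneg _) (pow_nonneg hy.1 k))
    (pow_nonneg (sub_nonneg.2 hy.2) _)

lemma sum_pB (n : ℕ) (y : ℝ) : ∑ k ∈ Finset.range (n + 1), pB n k y = 1 := by
  simpa [Polynomial.eval_finsetSum, pB_eq_eval_bernsteinPolynomial] using
    congrArg (Polynomial.eval y) (bernsteinPolynomial.sum ℝ n)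

lemma sum_natCast_mul_pB (n : ℕ) (y : ℝ) :
    ∑ k ∈ Finset.range (n + 1), (k : ℝ) * pB n k y = n * y := by
  simpa [Polynomial.eval_finsetSum, pB_eq_eval_bernsteinPolynomial] using
    congrArg (Polynomial.eval y) (bernsteinPolynomial.sum_smul ℝ n)

lemma sum_sub_sq_mul_pB (n : ℕ) (y : ℝ) :
    ∑ k ∈ Finset.range (n + 1), (n * y - k) ^ 2 * pB n k y = n * y * (1 - y) := by
  simpa [Polynomial.eval_finsetSum, pB_eq_eval_bernsteinPolynomial] using
    congrArg (Polynomial.eval y) (bernsteinPolynomial.variance ℝ n)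

lemma sum_pB_mul_sub_sq {n : ℕ} (hn : n ≠ 0) (x y : ℝ) :
    ∑ k ∈ Finset.range (n + 1), pB n k y * ((k : ℝ) / n - x) ^ 2 =
      y * (1 - y) / n + (y - x) ^ 2 := by
  have hexpand (k : ℕ) : pB n k y * ((k : ℝ) / n - x) ^ 2 =
      1 / n ^ 2 * ((n * y - k) ^ 2 * pB n k y) + 2 * (y - x) / n * (k * pB n k y) +
        (x ^ 2 - y ^ 2) * pB n k y := by
    field_simp
    ring
  simp only [hexpand, Finset.sum_add_distrib, ← Finset.mul_sum, sum_sub_sq_mul_pB,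
    sum_natCast_mul_pB, sum_pB]
  field_simp
  ring

lemma natCast_div_mem_Icc {k n : ℕ} (hk : k ∈ Finset.range (n + 1)) :
    (k : ℝ) / n ∈ Icc (0 : ℝ) 1 :=
  ⟨by positivity, div_le_one_of_le₀ (mod_cast Finset.mem_range_succ_iff.1 hk) n.cast_nonneg⟩

lemma tendsto_bop_of_continuousWithinAt {ι : Type*} {l : Filter ι} {n : ι → ℕ} {y : ι → ℝ}
    {g : ℝ → ℝ} {x K : ℝ}
    (hg : ContinuousWithinAt g (Icc 0 1) x) (hK : ∀ t ∈ Icc (0 : ℝ) 1, |g t| ≤ K)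
    (hn : Tendsto n l atTop) (hy : ∀ᶠ i in l, y i ∈ Icc (0 : ℝ) 1) (hyx : Tendsto y l (𝓝 x)) :
    Tendsto (fun i => Bop (n i) g (y i)) l (𝓝 (g x)) := by
  have hvar : Tendsto (fun i => y i * (1 - y i) / n i) l (𝓝 0) :=
    (hyx.mul (hyx.const_sub 1)).div_atTop (tendsto_natCast_atTop_atTop.comp hn)
  have hbias : Tendsto (fun i => (y i - x) ^ 2) l (𝓝 0) := by
    simpa using (hyx.sub_const x).pow 2
  have hmoment : Tendsto (fun i => ∑ k ∈ Finset.range (n i + 1),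
      pB (n i) k (y i) * dist ((k : ℝ) / n i) x ^ 2) l (𝓝 0) := by
    rw [← add_zero (0 : ℝ)]
    refine (hvar.add hbias).congr' ?_
    filter_upwards [hn.eventually_ne_atTop 0] with i hi
    simp only [Real.dist_eq, sq_abs, sum_pB_mul_sub_sq hi]
  simp only [Bop, mul_comm (g _), ← smul_eq_mul]
  exact tendsto_sum_smul_of_tendsto_sum_mul_dist_sq hg hK
    (hy.mono fun i hi k _ => pB_nonneg (n i) k hi) (.of_forall fun i => sum_pB (n i) (y i))
    (.of_forall fun _ _ => natCast_div_mem_Icc) hmoment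

end Bernstein

section Logarithmic

open scoped Topology

variable {μ : ℝ}

lemma aFun_mem_Icc (hμ : -1 < μ) (n : ℕ) {x : ℝ} (hx : x ∈ Icc (0 : ℝ) 1) :
    aFun μ n x ∈ Icc (0 : ℝ) 1 := by
  have hc : 0 ≤ n * (1 + μ) := mul_nonneg n.cast_nonneg (by linarith)
  have hx0 : 0 ≤ x / (n * (1 + μ)) := div_nonneg hx.1 hc
  have hx1 : x / (n * (1 + μ)) ≤ 1 / (n * (1 + μ)) := div_le_div_of_nonneg_right hx.2 hc
  have hnum : 0 ≤ log (1 + x / (n * (1 + μ))) := log_nonneg (by linarith)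
  have hle : log (1 + x / (n * (1 + μ))) ≤ log (1 + 1 / (n * (1 + μ))) :=
    log_le_log (by linarith) (by linarith)
  exact ⟨div_nonneg hnum (hnum.trans hle), div_le_one_of_le₀ hle (hnum.trans hle)⟩

lemma tendsto_aFun (hμ : -1 < μ) (x : ℝ) : Tendsto (fun n => aFun μ n x) atTop (𝓝 x) := by
  have hc : Tendsto (fun n : ℕ => (n : ℝ) * (1 + μ)) atTop atTop :=
    tendsto_natCast_atTop_atTop.atTop_mul_const (by linarith)
  have hlog (z : ℝ) : Tendsto (fun n : ℕ => n * (1 + μ) * log (1 + z / (n * (1 + μ)))) atTop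
      (𝓝 z) :=
    (tendsto_mul_log_one_add_div_atTop z).comp hc
  rw [← div_one x]
  refine ((hlog x).div (hlog 1) one_ne_zero).congr' ?_
  filter_upwards [hc.eventually_ne_atTop 0] with n hn
  simp only [Pi.div_apply, div_one, aFun, mul_div_mul_left _ _ hn]

lemma log_one_add_le_logμ (hμ : -1 < μ) {t : ℝ} (ht : 0 ≤ t) : log (1 + μ) ≤ logμ μ t :=
  log_le_log (by linarith) (by linarith)

lemma logμ_pos (hμ : 0 < μ) {t : ℝ} (ht : 0 ≤ t) : 0 < logμ μ t :=
  log_pos (by linarith)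

lemma continuousAt_logμ {t : ℝ} (ht : 1 + μ + t ≠ 0) : ContinuousAt (logμ μ) t :=
  ContinuousAt.log (by fun_prop) ht

lemma abs_div_logμ_le (hμ : 0 < μ) {a M t : ℝ} (ht : 0 ≤ t) (ha : |a| ≤ M) :
    |a / logμ μ t| ≤ M / log (1 + μ) := by
  rw [abs_div, abs_of_pos (logμ_pos hμ ht)]
  exact div_le_div₀ ((abs_nonneg a).trans ha) ha (log_pos (by linarith))
    (log_one_add_le_logμ (by linarith) ht)

lemma lop_eq_logμ_mul_bop (μ : ℝ) (n : ℕ) (f : ℝ → ℝ) (x : ℝ) :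
    Lop μ n f x = logμ μ x * Bop n (fun t => f t / logμ μ t) (aFun μ n x) := by
  simp only [Lop, Bop, mul_one_div]

end Logarithmic

theorem stmt5 (μ : ℝ) (hμ : 0 < μ) (f : ℝ → ℝ)
    (hbd : ∃ M : ℝ, ∀ x ∈ Set.Icc (0:ℝ) 1, |f x| ≤ M)
    (x : ℝ) (hx : x ∈ Set.Icc (0:ℝ) 1)
    (hcont : ContinuousWithinAt f (Set.Icc (0:ℝ) 1) x) :
    Tendsto (fun n : ℕ => Lop μ n f x) atTop (nhds (f x)) := by
  obtain ⟨M, hM⟩ := hbd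
  have hμ' : -1 < μ := by linarith
  have hlog : logμ μ x ≠ 0 := (logμ_pos hμ hx.1).ne'
  have hlogcont : ContinuousAt (logμ μ) x := continuousAt_logμ (by linarith [hx.1])
  have hB : Tendsto (fun n => Bop n (fun t => f t / logμ μ t) (aFun μ n x)) atTop
      (nhds (f x / logμ μ x)) :=
    tendsto_bop_of_continuousWithinAt (hcont.div hlogcont.continuousWithinAt hlog)
      (fun t ht => abs_div_logμ_le hμ ht.1 (hM t ht)) tendsto_id
      (.of_forall fun n => aFun_mem_Icc hμ' n hx) (tendsto_aFun hμ' x)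
  simpa only [lop_eq_logμ_mul_bop, mul_div_cancel₀ _ hlog] using hB.const_mul (logμ μ x)
end

section
/- Let μ > 0 and let f : [0,1] → ℝ be continuous. Then L_n(f, ·) converges to f uniformly on [0,1] as n → ∞; that is, sup_{x ∈ [0,1]} |L_n(f, x) − f(x)| → 0 as n → ∞. -/
open Real Filter Set

/-!
Writing `w = ln_μ`, the operator is a conjugated Bernstein operator with a perturbed argument:
`L_n f = w · (B_n (f / w) ∘ a_n)`. Since `w` is continuous and has no zero on `[0, 1]`, Bernstein's
theorem gives `B_n (f / w) → f / w` uniformly. The functions `a_n` map `[0, 1]` to itself and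
converge uniformly to the identity: Bernoulli's inequality `(1 + 1/r)^x ≤ 1 + x/r` and the bound
`1 - 1/t ≤ ln t ≤ t - 1` squeeze `a_n(x)` between `x` and `x + x/r` with `r = n(1 + μ)`.
The uniform continuity of `f / w` then allows composing with `a_n`, and `w` is bounded.
-/

section UniformConvergence

variable {ι α β γ : Type*} [UniformSpace β] [UniformSpace γ] {p : Filter ι}

theorem tendstoUniformlyOn_comp_of_uniformContinuousOn {F : ι → β → γ} {g : β → γ}
    {A : ι → α → β} {a : α → β} {s : Set α} {t : Set β}
    (hF : TendstoUniformlyOn F g p t) (hg : UniformContinuousOn g t)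
    (hA : TendstoUniformlyOn A a p s) (hAt : ∀ᶠ i in p, MapsTo (A i) s t) (hat : MapsTo a s t) :
    TendstoUniformlyOn (fun i x => F i (A i x)) (fun x => g (a x)) p s := by
  intro u hu
  obtain ⟨v, hv, hvu⟩ := comp_mem_uniformity_sets hu
  have hgA : TendstoUniformlyOn (fun i x => g (A i x)) (fun x => g (a x)) p s :=
    hg.comp_tendstoUniformlyOn_eventually hAt hat hA
  filter_upwards [hF v hv, hgA v hv, hAt] with i hFi hgAi hi x hx
  exact hvu ⟨g (A i x), hgAi x hx, hFi _ (hi hx)⟩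

end UniformConvergence

section Bernstein

theorem Bop_eq_bernsteinApproximation (n : ℕ) (G : C(unitInterval, ℝ)) {g : ℝ → ℝ}
    (hG : ∀ t, G t = g t) (y : unitInterval) : Bop n g y = bernsteinApproximation n G y := by
  rw [Bop, bernsteinApproximation.apply, Finset.sum_range]
  refine Finset.sum_congr rfl fun k _ => ?_
  rw [bernstein_apply, hG, smul_eq_mul, mul_comm, bernstein.z, pB]

theorem tendstoUniformlyOn_Bop {g : ℝ → ℝ} (hg : ContinuousOn g (Icc 0 1)) :
    TendstoUniformlyOn (fun n => Bop n g) g atTop (Icc 0 1) := by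
  let G : C(unitInterval, ℝ) := ⟨fun t => g t, hg.domRestrict⟩
  rw [tendstoUniformlyOn_iff_tendstoUniformly_comp_coe]
  simpa only [← Bop_eq_bernsteinApproximation _ G fun _ => rfl] using!
    ContinuousMap.tendsto_iff_tendstoUniformly.1 (bernsteinApproximation_uniform G)

theorem tendstoUniformlyOn_mul_Bop_div {w f : ℝ → ℝ} {a : ℕ → ℝ → ℝ}
    (hw : ContinuousOn w (Icc 0 1)) (hw₀ : ∀ x ∈ Icc (0 : ℝ) 1, w x ≠ 0)
    (hf : ContinuousOn f (Icc 0 1)) (ha : TendstoUniformlyOn a id atTop (Icc 0 1))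
    (hmaps : ∀ᶠ n in atTop, MapsTo (a n) (Icc 0 1) (Icc 0 1)) :
    TendstoUniformlyOn (fun n x => w x * Bop n (f / w) (a n x)) f atTop (Icc 0 1) := by
  have hg : ContinuousOn (f / w) (Icc 0 1) := hf.div hw hw₀
  have hcomp : TendstoUniformlyOn (fun n x => Bop n (f / w) (a n x)) (f / w) atTop (Icc 0 1) :=
    tendstoUniformlyOn_comp_of_uniformContinuousOn (tendstoUniformlyOn_Bop hg)
      (isCompact_Icc.uniformContinuousOn_of_continuous hg) ha hmaps (mapsTo_id _)
  have hconst : TendstoUniformlyOn (fun _ : ℕ => w) w atTop (Icc 0 1) :=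
    fun u hu => .of_forall fun _ x _ => refl_mem_uniformity hu
  have hmul : TendstoUniformlyOn (fun n x => w x * Bop n (f / w) (a n x)) (w * (f / w)) atTop
      (Icc 0 1) :=
    (tendstoLocallyUniformlyOn_iff_tendstoUniformlyOn_of_compact isCompact_Icc).1
      (hconst.tendstoLocallyUniformlyOn.mul₀ hcomp.tendstoLocallyUniformlyOn hw hg)
  exact hmul.congr_right fun x hx => mul_div_cancel₀ (f x) (hw₀ x hx)

end Bernstein

section LogRescale

/-- The logarithmic rescaling `x ↦ ln(1 + x/r) / ln(1 + 1/r)`, which fixes `0` and `1`. The function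
`a_n` is the case `r = n(1 + μ)`; a real parameter `r` lets us take `r → ∞` directly. -/
noncomputable def logRescale (r x : ℝ) : ℝ := log (1 + x / r) / log (1 + 1 / r)

variable {r x : ℝ}

theorem log_one_add_one_div_pos (hr : 0 < r) : 0 < log (1 + 1 / r) :=
  log_pos (lt_add_of_pos_right 1 (one_div_pos.2 hr))

theorem le_logRescale (hr : 0 < r) (hx : x ∈ Icc (0 : ℝ) 1) : x ≤ logRescale r x := by
  have hr' : 0 < 1 / r := one_div_pos.2 hr
  have bernoulli : (1 + 1 / r) ^ x ≤ 1 + x / r := by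
    simpa only [mul_one_div] using
      rpow_one_add_le_one_add_mul_self (by linarith : -1 ≤ 1 / r) hx.1 hx.2
  rw [logRescale, le_div_iff₀ (log_one_add_one_div_pos hr), ← log_rpow (by positivity)]
  exact log_le_log (by positivity) bernoulli

theorem logRescale_le_one (hr : 0 < r) (hx : x ∈ Icc (0 : ℝ) 1) : logRescale r x ≤ 1 := by
  have hx₀ : 0 ≤ x := hx.1
  rw [logRescale, div_le_one (log_one_add_one_div_pos hr)]
  gcongr
  exact hx.2

theorem logRescale_le_add_div (hr : 0 < r) (hx : 0 ≤ x) : logRescale r x ≤ x + x / r := by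
  have hnum : log (1 + x / r) ≤ x / r := by
    linarith [log_le_sub_one_of_pos (by positivity : 0 < 1 + x / r)]
  have hden : 1 / (r + 1) ≤ log (1 + 1 / r) :=
    calc 1 / (r + 1) = 1 - (1 + 1 / r)⁻¹ := by field_simp; ring
      _ ≤ log (1 + 1 / r) := one_sub_inv_le_log_of_pos (by positivity)
  calc logRescale r x ≤ (x / r) / (1 / (r + 1)) := by unfold logRescale; gcongr
    _ = x + x / r := by field_simp

theorem mapsTo_logRescale (hr : 0 < r) : MapsTo (logRescale r) (Icc 0 1) (Icc 0 1) :=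
  fun _ hx => ⟨hx.1.trans (le_logRescale hr hx), logRescale_le_one hr hx⟩

theorem abs_logRescale_sub_le (hr : 0 < r) (hx : x ∈ Icc (0 : ℝ) 1) :
    |logRescale r x - x| ≤ 1 / r := by
  have hle : x / r ≤ 1 / r := div_le_div_of_nonneg_right hx.2 hr.le
  rw [abs_of_nonneg (sub_nonneg.2 (le_logRescale hr hx))]
  linarith [logRescale_le_add_div hr hx.1]

theorem tendstoUniformlyOn_logRescale :
    TendstoUniformlyOn logRescale id atTop (Icc 0 1) := by
  rw [Metric.tendstoUniformlyOn_iff]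
  intro ε hε
  have hlim : Tendsto (fun r : ℝ => 1 / r) atTop (nhds 0) := tendsto_const_nhds.div_atTop tendsto_id
  filter_upwards [eventually_gt_atTop 0, hlim.eventually_lt_const hε] with r hr hrε x hx
  rw [dist_comm, dist_eq, id]
  exact (abs_logRescale_sub_le hr hx).trans_lt hrε

end LogRescale

section LogarithmicOperator

variable {μ : ℝ}

theorem aFun_eq_logRescale : aFun μ = fun n : ℕ => logRescale (n * (1 + μ)) := rfl

theorem tendsto_natCast_mul_one_add_atTop (hμ : -1 < μ) :
    Tendsto (fun n : ℕ => (n : ℝ) * (1 + μ)) atTop atTop :=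
  tendsto_natCast_atTop_atTop.atTop_mul_const (by linarith)

theorem tendstoUniformlyOn_aFun (hμ : -1 < μ) :
    TendstoUniformlyOn (aFun μ) id atTop (Icc 0 1) := by
  rw [aFun_eq_logRescale]
  exact fun u hu =>
    (tendsto_natCast_mul_one_add_atTop hμ).eventually (tendstoUniformlyOn_logRescale u hu)

theorem eventually_mapsTo_aFun (hμ : -1 < μ) :
    ∀ᶠ n in atTop, MapsTo (aFun μ n) (Icc 0 1) (Icc 0 1) := by
  rw [aFun_eq_logRescale]
  filter_upwards [(tendsto_natCast_mul_one_add_atTop hμ).eventually_gt_atTop 0] with n hn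
  exact mapsTo_logRescale hn

theorem logμ_pos_s6 {x : ℝ} (h : 0 < μ + x) : 0 < logμ μ x :=
  log_pos (by linarith)

theorem continuousOn_logμ : ContinuousOn (logμ μ) (Ioi (-(1 + μ))) :=
  ContinuousOn.log (by fun_prop) fun x hx => by linarith [mem_Ioi.1 hx]

theorem Lop_eq_mul_Bop (n : ℕ) (f : ℝ → ℝ) (x : ℝ) :
    Lop μ n f x = logμ μ x * Bop n (f / logμ μ) (aFun μ n x) := by
  simp only [Lop, Bop, Pi.div_apply, mul_one_div]

end LogarithmicOperator

theorem stmt6 (μ : ℝ) (hμ : 0 < μ) (f : ℝ → ℝ)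
    (hf : ContinuousOn f (Set.Icc (0:ℝ) 1)) :
    TendstoUniformlyOn (fun (n : ℕ) (x : ℝ) => Lop μ n f x) f atTop
      (Set.Icc (0:ℝ) 1) := by
  have hμ' : -1 < μ := by linarith
  have hne : ∀ x ∈ Icc (0 : ℝ) 1, logμ μ x ≠ 0 := fun x hx => (logμ_pos_s6 (by linarith [hx.1])).ne'
  have hcont : ContinuousOn (logμ μ) (Icc 0 1) :=
    continuousOn_logμ.mono fun x hx => mem_Ioi.2 (by linarith [hx.1])
  simp only [Lop_eq_mul_Bop]
  exact tendstoUniformlyOn_mul_Bop_div hcont hne hf (tendstoUniformlyOn_aFun hμ')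
    (eventually_mapsTo_aFun hμ')
end

section
/- Let μ > 0 and let 0 < λ₁ < λ₂ be real numbers. For a fixed x₀ ∈ [0,1], define h : [0,1] → ℝ by h(x) := 1 + (λ₂/(λ₁−λ₂)) · (ln(1+μ+x))^{λ₁}/(ln(1+μ+x₀))^{λ₁} + (λ₁/(λ₂−λ₁)) · (ln(1+μ+x))^{λ₂}/(ln(1+μ+x₀))^{λ₂}. Then h(x₀) = 0 and h(x) > 0 for every x ∈ [0,1] with x ≠ x₀ (in particular, x₀ is the strict absolute minimum point of h on [0,1]). -/
/-! With `t = ln(1+μ+x) / ln(1+μ+x₀)`, the number `h(x)` is `λ₁ λ₂` times the second divided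
difference of the function `p ↦ t ^ p` at the nodes `0, λ₁, λ₂`. It vanishes for `t = 1`, where
this function is constant, and is positive for `t ≠ 1`, where it is strictly convex. -/

open Real Filter Set

/-- The auxiliary function `h` built from powers of `ln(1+μ+x)`. -/
noncomputable def hFun (μ l₁ l₂ x₀ x : ℝ) : ℝ :=
  1 + (l₂ / (l₁ - l₂)) * (Real.log (1 + μ + x)) ^ l₁ / (Real.log (1 + μ + x₀)) ^ l₁
    + (l₁ / (l₂ - l₁)) * (Real.log (1 + μ + x)) ^ l₂ / (Real.log (1 + μ + x₀)) ^ l₂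

section DividedDifferences

variable {𝕜 : Type*} [Field 𝕜] [LinearOrder 𝕜] [IsStrictOrderedRing 𝕜] {s : Set 𝕜} {f : 𝕜 → 𝕜}
  {a x y : 𝕜}

lemma strictMonoOn_slope_of_strictConvexOn (hf : StrictConvexOn 𝕜 s f) (ha : a ∈ s) :
    StrictMonoOn (slope f a) (s \ {a}) := by
  intro x hx y hy hxy
  simpa only [slope_def_field] using hf.secant_strict_mono ha hx.1 hy.1 hx.2 hy.2 hxy

lemma slope_slope_pos_of_strictConvexOn (hf : StrictConvexOn 𝕜 s f) (ha : a ∈ s) (hx : x ∈ s)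
    (hy : y ∈ s) (hxa : x ≠ a) (hya : y ≠ a) (hxy : x ≠ y) : 0 < slope (slope f a) x y :=
  (strictMonoOn_slope_of_strictConvexOn hf ha).slope_pos ⟨hx, hxa⟩ ⟨hy, hya⟩ hxy

end DividedDifferences

lemma strictConvexOn_rpow_left {b : ℝ} (hb : 0 < b) (hb₁ : b ≠ 1) :
    StrictConvexOn ℝ univ fun p : ℝ ↦ b ^ p := by
  have hlog : Real.log b ≠ 0 := log_ne_zero_of_pos_of_ne_one hb hb₁
  refine ⟨convex_univ, fun p _ q _ hpq u v hu hv huv ↦ ?_⟩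
  have hne : Real.log b * p ≠ Real.log b * q := (mul_right_injective₀ hlog).ne hpq
  have hexp := strictConvexOn_exp.2 (mem_univ _) (mem_univ _) hne hu hv huv
  simp only [rpow_def_of_pos hb]
  convert hexp using 2
  simp only [smul_eq_mul]
  ring

lemma mul_mul_slope_slope_rpow {b p q : ℝ} (hpq : p ≠ q) :
    p * q * slope (slope (fun r : ℝ ↦ b ^ r) 0) p q =
      1 + q / (p - q) * b ^ p + p / (q - p) * b ^ q := by
  have hqp : q - p ≠ 0 := sub_ne_zero.mpr hpq.symm
  rcases eq_or_ne p 0 with rfl | hp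
  · simp [hpq.symm]
  rcases eq_or_ne q 0 with rfl | hq
  · simp [hp]
  simp only [slope_def_field, rpow_zero, sub_zero]
  rw [← neg_sub q p, div_neg]
  field_simp
  ring

lemma log_div_log_ne_one {x y : ℝ} (hx : 0 < x) (hy : 0 < y) (hxy : x ≠ y) :
    Real.log x / Real.log y ≠ 1 :=
  div_ne_one_of_ne (log_injOn_pos.ne hx hy hxy)

section AuxiliaryFunction

variable {μ l₁ l₂ x₀ x : ℝ}

lemma log_one_add_add_pos (hx : -μ < x) : 0 < Real.log (1 + μ + x) :=
  Real.log_pos (by linarith)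

lemma hFun_eq_mul_slope_slope (hl : l₁ ≠ l₂) (hx₀ : -μ < x₀) (hx : -μ < x) :
    hFun μ l₁ l₂ x₀ x = l₁ * l₂ * slope (slope
      (fun p : ℝ ↦ (Real.log (1 + μ + x) / Real.log (1 + μ + x₀)) ^ p) 0) l₁ l₂ := by
  have hL := (log_one_add_add_pos hx).le
  have hL₀ := (log_one_add_add_pos hx₀).le
  rw [mul_mul_slope_slope_rpow hl, div_rpow hL hL₀, div_rpow hL hL₀, hFun,
    mul_div_assoc, mul_div_assoc]

lemma hFun_self (hl : l₁ ≠ l₂) (hx₀ : -μ < x₀) : hFun μ l₁ l₂ x₀ x₀ = 0 := by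
  rw [hFun_eq_mul_slope_slope hl hx₀ hx₀, div_self (log_one_add_add_pos hx₀).ne']
  simp only [one_rpow, slope_def_field, sub_self, zero_div, mul_zero]

lemma hFun_pos (hl₁₂ : 0 < l₁ * l₂) (hl : l₁ ≠ l₂) (hx₀ : -μ < x₀) (hx : -μ < x)
    (hne : x ≠ x₀) : 0 < hFun μ l₁ l₂ x₀ x := by
  obtain ⟨hl₁, hl₂⟩ := mul_ne_zero_iff.mp hl₁₂.ne'
  have ht : 0 < Real.log (1 + μ + x) / Real.log (1 + μ + x₀) :=
    div_pos (log_one_add_add_pos hx) (log_one_add_add_pos hx₀)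
  have ht₁ : Real.log (1 + μ + x) / Real.log (1 + μ + x₀) ≠ 1 :=
    log_div_log_ne_one (by linarith) (by linarith) ((add_right_injective _).ne hne)
  rw [hFun_eq_mul_slope_slope hl hx₀ hx]
  exact mul_pos hl₁₂ (slope_slope_pos_of_strictConvexOn (strictConvexOn_rpow_left ht ht₁)
    (mem_univ _) (mem_univ _) (mem_univ _) hl₁ hl₂ hl)

end AuxiliaryFunction

theorem stmt8_general (μ l₁ l₂ : ℝ) (hl₁₂ : 0 < l₁ * l₂) (hl : l₁ ≠ l₂) (x₀ : ℝ)
    (hx₀ : -μ < x₀) :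
    hFun μ l₁ l₂ x₀ x₀ = 0 ∧ ∀ x, -μ < x → x ≠ x₀ → 0 < hFun μ l₁ l₂ x₀ x :=
  ⟨hFun_self hl hx₀, fun _ hx hne ↦ hFun_pos hl₁₂ hl hx₀ hx hne⟩

theorem stmt8 (μ : ℝ) (hμ : 0 < μ) (l₁ l₂ : ℝ) (hl₁ : 0 < l₁) (hl : l₁ < l₂)
    (x₀ : ℝ) (hx₀ : x₀ ∈ Set.Icc (0:ℝ) 1) :
    hFun μ l₁ l₂ x₀ x₀ = 0 ∧
    ∀ x ∈ Set.Icc (0:ℝ) 1, x ≠ x₀ → 0 < hFun μ l₁ l₂ x₀ x := by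
  have h := stmt8_general μ l₁ l₂ (mul_pos hl₁ (hl₁.trans hl)) hl.ne x₀ (by linarith [hx₀.1])
  exact ⟨h.1, fun x hx ↦ h.2 x (by linarith [hx.1])⟩
end

section
/- Let μ > 0. For every x ∈ [0,1], lim_{n→∞} n · (a_n(x) − x) = (x − x²)/(2(1+μ)), where a_n(x) := ln(1 + x/(n(1+μ))) / ln(1 + 1/(n(1+μ))). -/
open Real Filter Set

/-!
If `f h = a * h + b * h ^ 2 + o(h ^ 2)`, the linear terms of `f (x * h) - x * f h` cancel, leaving
`b * (x ^ 2 - x) * h ^ 2`, while `f h ∼ a * h`; hence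
`f (x * h) / f h = x + b / a * (x ^ 2 - x) * h + o(h)`. The limit is the case `f h = log (1 + h)`,
where `a = 1` and `b = -1 / 2`, along `h = 1 / (n * (1 + μ))`.
-/

open Asymptotics Topology

section QuadraticExpansion

variable {𝕜 : Type*} [NormedField 𝕜] {f : 𝕜 → 𝕜} {a b : 𝕜}

theorem tendsto_div_self_of_isLittleO_sq
    (hf : (fun h => f h - (a * h + b * h ^ 2)) =o[𝓝 0] fun h => h ^ 2) :
    Tendsto (fun h => f h / h) (𝓝[≠] 0) (𝓝 a) := by
  have hid : Tendsto (fun h : 𝕜 => h) (𝓝[≠] 0) (𝓝 0) := nhdsWithin_le_nhds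
  have hrem : Tendsto (fun h => (f h - (a * h + b * h ^ 2)) / h ^ 2) (𝓝[≠] 0) (𝓝 0) :=
    hf.tendsto_div_nhds_zero.mono_left nhdsWithin_le_nhds
  have hlim : Tendsto (fun h => a + b * h + (f h - (a * h + b * h ^ 2)) / h ^ 2 * h)
      (𝓝[≠] 0) (𝓝 a) := by
    simpa using ((hid.const_mul b).const_add a).add (hrem.mul hid)
  refine hlim.congr' ?_
  filter_upwards [self_mem_nhdsWithin] with h (hh : h ≠ 0)
  field_simp
  ring

theorem tendsto_comp_mul_sub_mul_div_sq_of_isLittleO_sq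
    (hf : (fun h => f h - (a * h + b * h ^ 2)) =o[𝓝 0] fun h => h ^ 2) (x : 𝕜) :
    Tendsto (fun h => (f (x * h) - x * f h) / h ^ 2) (𝓝[≠] 0) (𝓝 (b * (x ^ 2 - x))) := by
  have hscale : Tendsto (fun h => x * h) (𝓝 0) (𝓝 0) := by
    simpa using (continuous_const_mul x).tendsto 0
  have hsq : (fun h => (x * h) ^ 2) =O[𝓝 0] fun h => h ^ 2 := by
    simpa only [mul_pow] using isBigO_const_mul_self (x ^ 2) (fun h : 𝕜 => h ^ 2) (𝓝 0)
  have hfx : (fun h => f (x * h) - (a * (x * h) + b * (x * h) ^ 2)) =o[𝓝 0] fun h => h ^ 2 :=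
    (hf.comp_tendsto hscale).trans_isBigO hsq
  have hrem : Tendsto (fun h => (f (x * h) - (a * (x * h) + b * (x * h) ^ 2) -
      x * (f h - (a * h + b * h ^ 2))) / h ^ 2) (𝓝[≠] 0) (𝓝 0) :=
    (hfx.sub (hf.const_mul_left x)).tendsto_div_nhds_zero.mono_left nhdsWithin_le_nhds
  rw [← add_zero (b * (x ^ 2 - x))]
  refine (hrem.const_add (b * (x ^ 2 - x))).congr' ?_
  filter_upwards [self_mem_nhdsWithin] with h (hh : h ≠ 0)
  field_simp
  ring

theorem tendsto_div_sub_div_of_isLittleO_sq (ha : a ≠ 0)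
    (hf : (fun h => f h - (a * h + b * h ^ 2)) =o[𝓝 0] fun h => h ^ 2) (x : 𝕜) :
    Tendsto (fun h => (f (x * h) / f h - x) / h) (𝓝[≠] 0) (𝓝 (b * (x ^ 2 - x) / a)) := by
  have hden := tendsto_div_self_of_isLittleO_sq hf
  refine ((tendsto_comp_mul_sub_mul_div_sq_of_isLittleO_sq hf x).div hden ha).congr' ?_
  filter_upwards [self_mem_nhdsWithin, hden.eventually_ne ha] with h (hh : h ≠ 0) hfh
  have hfh₀ : f h ≠ 0 := (div_ne_zero_iff.mp hfh).1
  simp only [Pi.div_apply]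
  field_simp

end QuadraticExpansion

theorem isBigO_sum_range_add_log_one_sub (n : ℕ) :
    (fun x : ℝ => (∑ i ∈ Finset.range n, x ^ (i + 1) / (i + 1)) + log (1 - x))
      =O[𝓝 0] fun x => x ^ (n + 1) := by
  refine IsBigO.of_bound 2 ?_
  filter_upwards [Metric.ball_mem_nhds (0 : ℝ) one_half_pos] with x hball
  have hx : |x| < 1 / 2 := by simpa using hball
  calc ‖(∑ i ∈ Finset.range n, x ^ (i + 1) / (i + 1)) + log (1 - x)‖
      ≤ |x| ^ (n + 1) / (1 - |x|) := abs_log_sub_add_sum_range_le (by linarith) n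
    _ ≤ |x| ^ (n + 1) / (1 / 2) := by gcongr; linarith
    _ = 2 * ‖x ^ (n + 1)‖ := by rw [norm_pow, norm_eq_abs]; ring

theorem isLittleO_log_one_add_sub_quadratic :
    (fun h : ℝ => log (1 + h) - (1 * h + -1 / 2 * h ^ 2)) =o[𝓝 0] fun h => h ^ 2 := by
  have hneg : Tendsto (fun h : ℝ => -h) (𝓝 0) (𝓝 0) := by simpa using tendsto_neg (0 : ℝ)
  have hcubic : (fun h : ℝ => (-h) ^ 3) =o[𝓝 0] fun h => h ^ 2 := by
    simpa [Odd.neg_pow (by decide : Odd 3)] using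
      (isLittleO_pow_pow (𝕜 := ℝ) (by norm_num : 2 < 3)).neg_left
  refine (((isBigO_sum_range_add_log_one_sub 2).comp_tendsto hneg).trans_isLittleO
    hcubic).congr_left fun h => ?_
  simp only [Function.comp_apply, Finset.sum_range_succ, Finset.sum_range_zero, sub_neg_eq_add]
  push_cast
  ring

theorem tendsto_one_div_natCast_mul_nhdsNE_zero {c : ℝ} (hc : c ≠ 0) :
    Tendsto (fun n : ℕ => 1 / ((n : ℝ) * c)) atTop (𝓝[≠] 0) := by
  refine tendsto_nhdsWithin_iff.mpr ⟨?_, ?_⟩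
  · simpa [mul_comm] using (tendsto_inv_atTop_nhds_zero_nat (𝕜 := ℝ)).mul_const c⁻¹
  · filter_upwards [eventually_ne_atTop 0] with n hn
    exact one_div_ne_zero (mul_ne_zero (Nat.cast_ne_zero.mpr hn) hc)

theorem stmt10_general (μ : ℝ) (hμ : μ ≠ -1) (x : ℝ) :
    Tendsto (fun n : ℕ => (n : ℝ) * (aFun μ n x - x)) atTop
      (𝓝 ((x - x ^ 2) / (2 * (1 + μ)))) := by
  have hc : 1 + μ ≠ 0 := fun h => hμ (by linarith)
  have hlog := tendsto_div_sub_div_of_isLittleO_sq one_ne_zero isLittleO_log_one_add_sub_quadratic x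
  have hlim := (hlog.comp (tendsto_one_div_natCast_mul_nhdsNE_zero hc)).const_mul (1 + μ)⁻¹
  convert hlim using 2 with n
  · simp only [Function.comp_apply, aFun, mul_one_div, div_div_eq_mul_div, div_one]
    field_simp
  · field_simp
    ring

theorem stmt10 (μ : ℝ) (hμ : 0 < μ) (x : ℝ) (hx : x ∈ Set.Icc (0:ℝ) 1) :
    Tendsto (fun n : ℕ => (n : ℝ) * (aFun μ n x - x)) atTop
      (nhds ((x - x ^ 2) / (2 * (1 + μ)))) := by
  exact stmt10_general μ (by linarith) x
end

section
/- Let μ > 0 and set γ_n := max_{x ∈ [0,1]} (a_n(x) − x), where a_n(x) := ln(1 + x/(n(1+μ))) / ln(1 + 1/(n(1+μ))). Then lim_{n→∞} n · γ_n = 1/(8(1+μ)); in particular √n · γ_n = O(1/√n) as n → ∞. -/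
open Real Filter Set

/-- `γ_n := max_{x ∈ [0,1]} (a_n(x) - x)`. -/
noncomputable def gammaN (μ : ℝ) (n : ℕ) : ℝ :=
  sSup ((fun x => aFun μ n x - x) '' Set.Icc (0:ℝ) 1)

/-!
With `t = 1 / (n (1 + μ))` and `s = log (1 + t) / t - 1`, concavity of the logarithm gives
`a_n(x) - x ≤ (s - log (1 + s)) / log (1 + t)`, with equality where the tangent line touches, so
`γ_n` has a closed form. The expansion `s - log (1 + s) ~ s ^ 2 / 2` at `0`, used once for `t` and
once for `s ~ -t / 2`, then yields `γ_n ~ t / 8`.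
-/

open Asymptotics Topology

section LogRem

/-- The first-order Taylor remainder of `log (1 + ·)` at `0`, with the sign that makes it
nonnegative on `(-1, ∞)`. -/
noncomputable def logRem (s : ℝ) : ℝ := s - log (1 + s)

theorem abs_logRem_sub_sq_div_two_le {s : ℝ} (hs : |s| < 1) :
    |logRem s - s ^ 2 / 2| ≤ |s| ^ 3 / (1 - |s|) := by
  have taylor : |-s + s ^ 2 / 2 + log (1 + s)| ≤ |s| ^ 3 / (1 - |s|) := by
    simpa [Finset.sum_range_succ, one_add_one_eq_two] using
      abs_log_sub_add_sum_range_le (x := -s) (by rwa [abs_neg]) 2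
  rwa [← abs_neg, show -(logRem s - s ^ 2 / 2) = -s + s ^ 2 / 2 + log (1 + s) by rw [logRem]; ring]

theorem logRem_isEquivalent : logRem ~[𝓝 0] fun s ↦ s ^ 2 / 2 := by
  have cubic : (fun s ↦ logRem s - s ^ 2 / 2) =O[𝓝 0] fun s : ℝ ↦ s ^ 3 := by
    have near_zero : ∀ᶠ s : ℝ in 𝓝 0, |s| < 1 / 2 :=
      continuous_abs.continuousAt.eventually_lt_const (by norm_num)
    refine IsBigO.of_bound 2 (near_zero.mono fun s hs ↦ ?_)
    rw [norm_eq_abs, norm_eq_abs, abs_pow]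
    refine (abs_logRem_sub_sq_div_two_le (by linarith)).trans ?_
    rw [div_le_iff₀ (by linarith)]
    nlinarith [pow_nonneg (abs_nonneg s) 3]
  have cube_isLittleO : (fun s : ℝ ↦ s ^ 3) =o[𝓝 0] fun s ↦ s ^ 2 / 2 := by
    simpa only [div_eq_inv_mul] using
      (isLittleO_pow_pow (by norm_num)).const_mul_right (by norm_num : (2 : ℝ)⁻¹ ≠ 0)
  exact (cubic.trans_isLittleO cube_isLittleO).isEquivalent

theorem log_one_add_isEquivalent : (fun t ↦ log (1 + t)) ~[𝓝 0] fun t ↦ t := by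
  have deriv_log : HasDerivAt (fun t ↦ log (1 + t)) 1 0 := by
    simpa using ((hasDerivAt_id (0 : ℝ)).const_add 1).log (by simp)
  simpa [IsEquivalent, Pi.sub_def] using deriv_log.isLittleO

theorem log_one_add_div_sub_one_isEquivalent :
    (fun t ↦ log (1 + t) / t - 1) ~[𝓝[≠] 0] fun t ↦ -t / 2 := by
  have h := (logRem_isEquivalent.mono nhdsWithin_le_nhds).neg.div
    (IsEquivalent.refl (u := fun t : ℝ ↦ t) (l := 𝓝[≠] 0))
  refine (h.congr_left ?_).congr_right ?_ <;>
    filter_upwards [self_mem_nhdsWithin] with t (ht : t ≠ 0)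
  · simp only [Pi.div_apply, logRem]
    field_simp
    ring
  · simp only [Pi.div_apply]
    field_simp

end LogRem

section LogGap

/-- The maximum over `x ∈ [0, 1]` of the gap `log (1 + x * t) / log (1 + t) - x` between the
normalized logarithm and its chord, in closed form; see `isGreatest_logGap`. -/
noncomputable def logGap (t : ℝ) : ℝ := logRem (log (1 + t) / t - 1) / log (1 + t)

theorem logGap_isEquivalent : logGap ~[𝓝[≠] 0] fun t ↦ t / 8 := by
  have inner := log_one_add_div_sub_one_isEquivalent
  have inner_tendsto : Tendsto (fun t ↦ log (1 + t) / t - 1) (𝓝[≠] 0) (𝓝 0) := by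
    refine inner.symm.tendsto_nhds (tendsto_nhdsWithin_of_tendsto_nhds ?_)
    exact Continuous.tendsto' (by fun_prop) _ _ (by simp)
  have numerator : (fun t ↦ logRem (log (1 + t) / t - 1)) ~[𝓝[≠] 0] fun t ↦ (-t / 2) ^ 2 / 2 :=
    (logRem_isEquivalent.comp_tendsto inner_tendsto).trans ((inner.pow 2).div .refl)
  refine (numerator.div (log_one_add_isEquivalent.mono nhdsWithin_le_nhds)).congr_right ?_
  filter_upwards [self_mem_nhdsWithin] with t (ht : t ≠ 0)
  simp only [Pi.div_apply]
  field_simp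
  norm_num

variable {t : ℝ}

theorem log_one_add_mul_div_sub_le_logGap (ht : 0 < t) {x : ℝ} (hx : 0 ≤ x) :
    log (1 + x * t) / log (1 + t) - x ≤ logGap t := by
  have hL : 0 < log (1 + t) := log_pos (by linarith)
  have hx' : 0 < 1 + x * t := by positivity
  -- The tangent line to `log` at `t / log (1 + t)`, where its slope is that of the chord.
  have tangent := log_le_sub_one_of_pos (mul_pos hx' (div_pos hL ht))
  rw [log_mul hx'.ne' (div_pos hL ht).ne'] at tangent
  rw [logGap, logRem, add_sub_cancel, le_div_iff₀ hL, sub_mul, div_mul_cancel₀ _ hL.ne']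
  have expand : (1 + x * t) * (log (1 + t) / t) = log (1 + t) / t + x * log (1 + t) := by
    field_simp
  linarith

theorem inv_log_one_add_sub_inv_mem_Icc (ht : 0 < t) :
    (log (1 + t))⁻¹ - t⁻¹ ∈ Icc (0 : ℝ) 1 := by
  have hL : 0 < log (1 + t) := log_pos (by linarith)
  have log_le : log (1 + t) ≤ t := by
    linarith [log_le_sub_one_of_pos (by linarith : 0 < 1 + t)]
  have le_log : t / (1 + t) ≤ log (1 + t) := by
    refine Eq.trans_le ?_ (one_sub_inv_le_log_of_pos (by linarith : 0 < 1 + t))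
    field_simp
    ring
  constructor
  · exact sub_nonneg.2 (inv_anti₀ hL log_le)
  · have inv_le : (log (1 + t))⁻¹ ≤ t⁻¹ + 1 := by
      simpa only [inv_div, add_div, div_self ht.ne', one_div] using
        inv_anti₀ (by positivity) le_log
    linarith

theorem log_one_add_mul_div_sub_eq_logGap (ht : 0 < t) :
    log (1 + ((log (1 + t))⁻¹ - t⁻¹) * t) / log (1 + t) - ((log (1 + t))⁻¹ - t⁻¹) = logGap t := by
  have hL : 0 < log (1 + t) := log_pos (by linarith)
  have tangency : 1 + ((log (1 + t))⁻¹ - t⁻¹) * t = (log (1 + t) / t)⁻¹ := by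
    field_simp
    ring
  rw [tangency, log_inv, logGap, logRem, add_sub_cancel]
  field_simp
  ring

theorem isGreatest_logGap (ht : 0 < t) :
    IsGreatest ((fun x ↦ log (1 + x * t) / log (1 + t) - x) '' Icc 0 1) (logGap t) := by
  refine ⟨⟨_, inv_log_one_add_sub_inv_mem_Icc ht, log_one_add_mul_div_sub_eq_logGap ht⟩, ?_⟩
  rintro _ ⟨x, hx, rfl⟩
  exact log_one_add_mul_div_sub_le_logGap ht hx.1

end LogGap

theorem gammaN_eq_logGap {μ : ℝ} (hμ : -1 < μ) {n : ℕ} (hn : 0 < n) :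
    gammaN μ n = logGap (1 / (n * (1 + μ))) := by
  have hμ' : 0 < 1 + μ := by linarith
  simpa only [gammaN, aFun, mul_one_div] using
    (isGreatest_logGap (t := 1 / (n * (1 + μ))) (by positivity)).csSup_eq

theorem gammaN_isEquivalent {μ : ℝ} (hμ : -1 < μ) :
    gammaN μ ~[atTop] fun n ↦ 1 / (n * (1 + μ)) / 8 := by
  have hμ' : 0 < 1 + μ := by linarith
  have mesh : Tendsto (fun n : ℕ ↦ 1 / (n * (1 + μ))) atTop (𝓝[≠] 0) := by
    refine tendsto_nhdsWithin_iff.2 ⟨?_, ?_⟩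
    · exact (tendsto_natCast_atTop_atTop.atTop_mul_const hμ').const_div_atTop 1
    · filter_upwards [eventually_gt_atTop 0] with n hn
      exact ne_of_gt (by positivity)
  refine (logGap_isEquivalent.comp_tendsto mesh).congr_left ?_
  filter_upwards [eventually_gt_atTop 0] with n hn
  exact (gammaN_eq_logGap hμ hn).symm

theorem tendsto_mul_gammaN {μ : ℝ} (hμ : -1 < μ) :
    Tendsto (fun n : ℕ ↦ n * gammaN μ n) atTop (𝓝 (1 / (8 * (1 + μ)))) := by
  have hμ' : 0 < 1 + μ := by linarith
  have h := (IsEquivalent.refl (u := fun n : ℕ ↦ (n : ℝ))).mul (gammaN_isEquivalent hμ)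
  refine h.symm.tendsto_nhds (tendsto_const_nhds.congr' ?_)
  filter_upwards [eventually_gt_atTop 0] with n hn
  simp only [Pi.mul_apply]
  field_simp

theorem isBigO_sqrt_mul_of_isBigO_mul {α : Type*} {l : Filter α} {u v : α → ℝ}
    (h : (fun a ↦ u a * v a) =O[l] fun _ ↦ (1 : ℝ)) :
    (fun a ↦ √(u a) * v a) =O[l] fun a ↦ 1 / √(u a) := by
  refine (h.mul (isBigO_refl (fun a ↦ 1 / √(u a)) l)).congr (fun a ↦ ?_) fun a ↦ one_mul _
  rw [mul_right_comm, mul_one_div, div_sqrt]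

theorem stmt11_general (μ : ℝ) (hμ : -1 < μ) :
    Tendsto (fun n : ℕ => (n : ℝ) * gammaN μ n) atTop (nhds (1 / (8 * (1 + μ)))) ∧
    (fun n : ℕ => Real.sqrt n * gammaN μ n) =O[atTop] (fun n : ℕ => 1 / Real.sqrt n) :=
  ⟨tendsto_mul_gammaN hμ, isBigO_sqrt_mul_of_isBigO_mul ((tendsto_mul_gammaN hμ).isBigO_one ℝ)⟩

theorem stmt11 (μ : ℝ) (hμ : 0 < μ) :
    Tendsto (fun n : ℕ => (n : ℝ) * gammaN μ n) atTop (nhds (1 / (8 * (1 + μ)))) ∧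
    (fun n : ℕ => Real.sqrt n * gammaN μ n) =O[atTop] (fun n : ℕ => 1 / Real.sqrt n) :=
  stmt11_general μ (by linarith)
end
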